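/- arXiv:1804.08810 — 3 statements merged into one kernel-verified Lean document; each statement's English description precedes it below -/
import Mathlib

section
/- There are constants c, c' > 0 such that for all sufficiently large even N and every field K the following holds. If f ∈ K[x_1,…,x_N] is computed by an ROABP of width w ≥ 2 (with any variable order π), then for φ drawn from D, with probability at least 1 − 2^{−c'·√N·log N} one has rank(M_{f^φ}) ≤ w^{c·log N}·2^{N/2 − N^{1/5}/2}. -/
open MvPolynomial

noncomputable section

/-- A multilinear polynomial: every exponent is at most 1. -/
def MLin {σ : Type*} {K : Type*} [CommSemiring K] (f : MvPolynomial σ K) : Prop :=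
  ∀ d ∈ f.support, ∀ i, d i ≤ 1

/-- The partial derivative matrix of a multilinear polynomial over Y ∪ Z
(Y = `inl`-variables, Z = `inr`-variables), rows and columns indexed by subsets. -/
def pdm {h : ℕ} {K : Type*} [CommSemiring K] (f : MvPolynomial (Fin h ⊕ Fin h) K) :
    Matrix (Finset (Fin h)) (Finset (Fin h)) K := fun S T =>
  f.coeff ((∑ i ∈ S, Finsupp.single (Sum.inl i) 1) + ∑ j ∈ T, Finsupp.single (Sum.inr j) 1)

/-- The field G = F(W), the field of rational functions over F in variables
`w_{i,k,j}`, `i,k,j ∈ ℕ`. -/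
abbrev Gf (F : Type*) [Field F] : Type _ := FractionRing (MvPolynomial (ℕ × ℕ × ℕ) F)

/-- The element w_{i,k,j} of G. -/
def wv (F : Type*) [Field F] (i k j : ℕ) : Gf F :=
  algebraMap (MvPolynomial (ℕ × ℕ × ℕ) F) (Gf F) (MvPolynomial.X (i, k, j))

/-- The Raz–Yehudayoff polynomials `g_{i,j}` (first argument is fuel; every
recursive call reduces `j - i` by at least 2, so fuel `N` suffices for `g_{1,N}`). -/
def RY (F : Type*) [Field F] : ℕ → ℕ → ℕ → MvPolynomial ℕ (Gf F)
  | 0, _, _ => 1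
  | fuel + 1, i, j =>
      if j < i then 1
      else (1 + X i * X j) * RY F fuel (i + 1) (j - 1)
        + ∑ k ∈ (Finset.Icc (i + 1) (j - 2)).filter (fun k => (k - i) % 2 = 1),
            C (wv F i k j) * RY F fuel i k * RY F fuel (k + 1) j

/-- The Raz–Yehudayoff polynomial `g = g_{1,N}`, in the variables `x_1, …, x_N`. -/
def razPoly (F : Type*) [Field F] (N : ℕ) : MvPolynomial ℕ (Gf F) := RY F N 1 N

/-- `|φ(S) ∩ Y|` for a partition function φ. -/
def yCount {h : ℕ} (φ : ℕ → Fin h ⊕ Fin h) (S : Finset ℕ) : ℕ :=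
  (S.filter fun x => (φ x).isLeft = true).card

/-- `|φ(S) ∩ Z|` for a partition function φ. -/
def zCount {h : ℕ} (φ : ℕ → Fin h ⊕ Fin h) (S : Finset ℕ) : ℕ :=
  (S.filter fun x => (φ x).isRight = true).card

/-- `S` is `k`-unbalanced with respect to the partition φ. -/
def kUnb {h : ℕ} (φ : ℕ → Fin h ⊕ Fin h) (k : ℕ) (S : Finset ℕ) : Prop :=
  (k : ℤ) ≤ |(yCount φ S : ℤ) - (zCount φ S : ℤ)|

/-- Extension of a partition given on `X` to all of ℕ (junk value elsewhere). -/
def extPart {h : ℕ} (hh : 0 < h) (X : Finset ℕ) (e : {x // x ∈ X} → Fin h ⊕ Fin h) :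
    ℕ → Fin h ⊕ Fin h := fun x =>
  if hx : x ∈ X then e ⟨x, hx⟩ else Sum.inl ⟨0, hh⟩

/-- Probability of an event under the uniform distribution on a finite type. -/
def unifProb {Ω : Type*} [Fintype Ω] (p : Ω → Prop) : ℝ :=
  haveI := Classical.decPred p
  ((Finset.univ.filter p).card : ℝ) / (Fintype.card Ω : ℝ)

/-- The (1,1) entry of the product `M 0 * M 1 * ⋯ * M (n-1)`. -/
def mprodVal {K : Type*} [CommSemiring K] {n w : ℕ} (hw : 0 < w)
    (M : Fin n → Matrix (Fin w) (Fin w) (MvPolynomial ℕ K)) : MvPolynomial ℕ K :=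
  (List.ofFn M).prod ⟨0, hw⟩ ⟨0, hw⟩

/-- An oblivious read-once ABP of width `w` in variables `x_1, …, x_N` with
variable order π (a permutation of `{1, …, N}`): the ℓ-th layer matrix has
entries of degree at most 1 in the single variable `x_{π(ℓ)}`. -/
def IsROABP {K : Type*} [CommSemiring K] (N w : ℕ) (π : ℕ → ℕ)
    (M : Fin N → Matrix (Fin w) (Fin w) (MvPolynomial ℕ K)) : Prop :=
  Set.BijOn π (Set.Icc 1 N) (Set.Icc 1 N) ∧
    ∀ ℓ : Fin N, ∀ i j, ∃ a b : K, M ℓ i j = C a + C b * X (π (ℓ.val + 1))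

/-- An `r`-pass syntactically multilinear ABP of width `w`. -/
def IsRPass {K : Type*} [CommSemiring K] (N w r : ℕ) (π : Fin r → ℕ → ℕ)
    (M : Fin (r * N) → Matrix (Fin w) (Fin w) (MvPolynomial ℕ K)) : Prop :=
  (∀ j, Set.BijOn (π j) (Set.Icc 1 N) (Set.Icc 1 N)) ∧
  (∀ ℓ : Fin (r * N), ∀ i j, ∃ a b : K,
      M ℓ i j = C a + C b *
        X (π ⟨ℓ.val / N, Nat.div_lt_of_lt_mul (by rw [Nat.mul_comm N r]; exact ℓ.2)⟩
            (ℓ.val % N + 1))) ∧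
  (∀ (idx : Fin (r * N + 1) → Fin w) (v : ℕ) (ℓ₁ ℓ₂ : Fin (r * N)),
      v ∈ (M ℓ₁ (idx ℓ₁.castSucc) (idx ℓ₁.succ)).vars →
      v ∈ (M ℓ₂ (idx ℓ₂.castSucc) (idx ℓ₂.succ)).vars → ℓ₁ = ℓ₂)

/-- An α-sparse ROABP with variable blocks `Xs 0, …, Xs (d-1)`, width `w` and
sparsity `t`: every entry of the `i`-th matrix is a multilinear polynomial in the
variables `Xs i` with at most `t` monomials. -/
def IsSparseROABP {K : Type*} [CommSemiring K] {d : ℕ} (w t : ℕ)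
    (Xs : Fin d → Finset ℕ) (M : Fin d → Matrix (Fin w) (Fin w) (MvPolynomial ℕ K)) : Prop :=
  ∀ ℓ i j, MLin (M ℓ i j) ∧ (M ℓ i j).vars ⊆ Xs ℓ ∧ (M ℓ i j).support.card ≤ t

/-- One layer of a read-once branching program. -/
def layP {V K : Type*} [CommSemiring K] {w : ℕ}
    (p : V × Matrix (Fin w) (Fin w) K × Matrix (Fin w) (Fin w) K) :
    Matrix (Fin w) (Fin w) (MvPolynomial V K) :=
  Matrix.of fun i j => C (p.2.1 i j) + C (p.2.2 i j) * X p.1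

/-- The coefficient matrix of a layer selected by an exponent vector. -/
def layC {V K : Type*} {w : ℕ} (m : V → ℕ)
    (p : V × Matrix (Fin w) (Fin w) K × Matrix (Fin w) (Fin w) K) :
    Matrix (Fin w) (Fin w) K :=
  if m p.1 = 0 then p.2.1 else p.2.2

open Classical in
theorem coeff_layers {V K : Type*} [CommRing K] {w : ℕ}
    (L : List (V × Matrix (Fin w) (Fin w) K × Matrix (Fin w) (Fin w) K)) :
    (L.map Prod.fst).Nodup → ∀ m : V →₀ ℕ, (∀ x, m x ≤ 1) → ∀ i j,
      coeff m ((L.map layP).prod i j) =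
        if (∀ x, m x ≠ 0 → x ∈ L.map Prod.fst) then ((L.map (layC m)).prod) i j else 0 := by
  induction L with
  | nil =>
    intro _ m hm i j
    simp only [List.map_nil, List.prod_nil, Matrix.one_apply, List.not_mem_nil, imp_false, not_not]
    have : (∀ x, m x = 0) ↔ 0 = m := by
      rw [eq_comm, DFunLike.ext_iff]; rfl
    by_cases hij : i = j
    · simp only [hij, if_true, coeff_one, this]
    · simp [hij]
  | cons p L ih =>
    intro hnd m hm i j
    obtain ⟨v, a, b⟩ := p
    simp only [List.map_cons, List.nodup_cons] at hnd
    obtain ⟨hv, hnd⟩ := hnd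
    have ih := ih hnd
    simp only [List.map_cons, List.prod_cons, Matrix.mul_apply]
    rw [coeff_sum]
    have key : ∀ k, coeff m (layP (v, a, b) i k * (L.map layP).prod k j) =
        a i k * coeff m ((L.map layP).prod k j) + b i k *
          (if v ∈ m.support then coeff (m - Finsupp.single v 1) ((L.map layP).prod k j) else 0) := by
      intro k
      rw [← coeff_mul_X']
      simp only [layP, Matrix.of_apply, add_mul, coeff_add, coeff_C_mul, mul_assoc]
      rw [mul_comm (X v)]
    simp only [key]
    by_cases h0 : m v = 0
    · have hs : v ∉ m.support := by simpa using h0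
      have hc : (∀ x, m x ≠ 0 → x ∈ v :: L.map Prod.fst) ↔ (∀ x, m x ≠ 0 → x ∈ L.map Prod.fst) := by
        constructor
        · intro h x hx
          rcases List.mem_cons.1 (h x hx) with rfl | h'
          · exact absurd h0 hx
          · exact h'
        · intro h x hx
          exact List.mem_cons_of_mem _ (h x hx)
      simp only [hs, if_false, mul_zero, add_zero, ih m hm, hc]
      split_ifs
      · simp [layC, h0]
      · simp
    · have hs : v ∈ m.support := by simpa using h0
      have hn : ¬ (∀ x, m x ≠ 0 → x ∈ L.map Prod.fst) := fun h => hv (h v h0)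
      have hm1 : m v = 1 := le_antisymm (hm v) (Nat.one_le_iff_ne_zero.2 h0)
      have hval : ∀ x, x ≠ v → (m - Finsupp.single v 1 : V →₀ ℕ) x = m x := by
        intro x hx
        simp [Ne.symm hx]
      have hvv : (m - Finsupp.single v 1 : V →₀ ℕ) v = 0 := by simp [hm1]
      have hm' : ∀ x, (m - Finsupp.single v 1 : V →₀ ℕ) x ≤ 1 := fun x =>
        (Nat.sub_le _ _).trans (hm x)
      have hc : (∀ x, m x ≠ 0 → x ∈ v :: L.map Prod.fst) ↔
          (∀ x, (m - Finsupp.single v 1 : V →₀ ℕ) x ≠ 0 → x ∈ L.map Prod.fst) := by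
        constructor
        · intro h x hx
          have hxv : x ≠ v := by rintro rfl; exact hx hvv
          rw [hval x hxv] at hx
          rcases List.mem_cons.1 (h x hx) with h' | h'
          · exact absurd h' hxv
          · exact h'
        · intro h x hx
          by_cases hxv : x = v
          · simp [hxv]
          · exact List.mem_cons_of_mem _ (h x (by rwa [hval x hxv]))
      have hL : L.map (layC (m - Finsupp.single v 1 : V →₀ ℕ)) = L.map (layC m) := by
        apply List.map_congr_left
        intro p hp
        have : p.1 ≠ v := by
          rintro rfl
          exact hv (List.mem_map_of_mem hp)
        simp only [layC, hval _ this]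
      simp only [hs, if_true, ih m hm, hn, if_false, mul_zero, zero_add, ih _ hm', hc, hL]
      split_ifs
      · simp [layC, h0]
      · simp

theorem rank_factor {α β K : Type*} [Fintype α] [Fintype β] [DecidableEq α] [DecidableEq β]
    [Field K] {w : ℕ} (F : Matrix (Finset α) (Finset β) K)
    (p q : Fin w → Finset α → Finset β → K) (Z : Finset β) (Y : Finset α)
    (hF : ∀ S T, F S T = ∑ k, p k S T * q k S T)
    (hp : ∀ k S T, p k S T = p k S (T ∩ Z)) (hq : ∀ k S T, q k S T = q k (S ∩ Y) T) :
    F.rank ≤ w * 2 ^ (Z.card + Y.card) := by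
  classical
  let A : Matrix (Finset α) (Fin w × Z.powerset × Y.powerset) K :=
    Matrix.of fun S u => if S ∩ Y = u.2.2.1 then p u.1 S u.2.1.1 else 0
  let B : Matrix (Fin w × Z.powerset × Y.powerset) (Finset β) K :=
    Matrix.of fun u T => if T ∩ Z = u.2.1.1 then q u.1 u.2.2.1 T else 0
  have hAB : F = A * B := by
    ext S T
    rw [Matrix.mul_apply, hF, Fintype.sum_prod_type]
    refine Finset.sum_congr rfl fun k _ => ?_
    rw [Finset.sum_eq_single ((⟨T ∩ Z, by simp⟩, ⟨S ∩ Y, by simp⟩) : Z.powerset × Y.powerset)]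
    · simp [A, B, ← hp, ← hq]
    · rintro ⟨⟨U, hU⟩, ⟨W, hW⟩⟩ _ hne
      simp only [A, B, Matrix.of_apply]
      by_cases h1 : S ∩ Y = W
      · by_cases h2 : T ∩ Z = U
        · subst h1; subst h2; exact absurd rfl hne
        · simp [h2]
      · simp [h1]
    · simp
  rw [hAB]
  refine (Matrix.rank_mul_le_left A B).trans ((Matrix.rank_le_card_width A).trans (le_of_eq ?_))
  rw [Fintype.card_prod, Fintype.card_prod, Fintype.card_fin, Fintype.card_coe, Fintype.card_coe,
    Finset.card_powerset, Finset.card_powerset, pow_add]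

/-- Bool as a sign. -/
def sg (b : Bool) : ℤ := if b then 1 else -1

/-- The walk started at `x` stays within `[-β, β]`. -/
def GoodW (β : ℝ) : ℤ → List Bool → Prop
  | _, [] => True
  | x, b :: l => |((x + sg b : ℤ) : ℝ)| ≤ β ∧ GoodW β (x + sg b) l

theorem not_goodW (β : ℝ) (l : List Bool) : ∀ x, ¬ GoodW β x l →
    ∃ t, t ≤ l.length ∧ β < |((x + ((l.take t).map sg).sum : ℤ) : ℝ)| := by
  induction l with
  | nil => intro x h; exact absurd trivial h
  | cons b l ih =>
    intro x h
    simp only [GoodW, not_and_or, not_le] at h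
    rcases h with h | h
    · exact ⟨1, by simp, by simpa using h⟩
    · obtain ⟨t, ht, h⟩ := ih _ h
      refine ⟨t + 1, by simpa using ht, ?_⟩
      simpa [add_assoc] using h

open Classical in
theorem count_goodW (β : ℝ) (hβ : 0 ≤ β) (n : ℕ) : ∀ x : ℤ, |(x : ℝ)| ≤ β →
    (β + 1) ^ 2 * ((Finset.univ.filter fun s : Fin n → Bool => GoodW β x (List.ofFn s)).card : ℝ) ≤
      (2 * (1 - 1 / (2 * (β + 1) ^ 2))) ^ n * (2 * (β + 1) ^ 2 - (x : ℝ) ^ 2) := by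
  have hA : 0 < (β + 1) ^ 2 := by positivity
  have hA1 : 1 ≤ (β + 1) ^ 2 := by nlinarith
  have hρ : 0 ≤ 2 * (1 - 1 / (2 * (β + 1) ^ 2)) := by
    have : 1 / (2 * (β + 1) ^ 2) ≤ 1 := by
      rw [div_le_one (by positivity)]; linarith
    linarith
  have hu : ∀ y : ℝ, |y| ≤ β + 1 → y ^ 2 ≤ (β + 1) ^ 2 := fun y hy => by
    rw [← sq_abs]; gcongr
  induction n with
  | zero =>
    intro x hx
    have := hu x (by linarith)
    simp [List.ofFn_zero, GoodW]
    linarith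
  | succ n ih =>
    intro x hx
    have hcons : ∀ (b : Bool) (s : Fin n → Bool),
        List.ofFn ((Fin.consEquiv (fun _ : Fin (n + 1) => Bool)) (b, s)) = b :: List.ofFn s := by
      intro b s
      simp [Fin.consEquiv, List.ofFn_succ]
    have hcard : ((Finset.univ.filter fun s : Fin (n + 1) → Bool =>
        GoodW β x (List.ofFn s)).card : ℝ) = ∑ b : Bool,
        if |((x + sg b : ℤ) : ℝ)| ≤ β then ((Finset.univ.filter fun s : Fin n → Bool =>
          GoodW β (x + sg b) (List.ofFn s)).card : ℝ) else 0 := by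
      rw [Finset.natCast_card_filter, ← (Fin.consEquiv (fun _ => Bool)).sum_comp,
        Fintype.sum_prod_type]
      refine Finset.sum_congr rfl fun b _ => ?_
      rw [Finset.natCast_card_filter]
      split_ifs with hb
      · refine Finset.sum_congr rfl fun s _ => ?_
        simp only [hcons, GoodW, hb, true_and]
      · apply Finset.sum_eq_zero
        intro s _
        simp only [hcons, GoodW, hb, false_and, if_false]
    rw [hcard, Finset.mul_sum]
    have hterm : ∀ b : Bool, (β + 1) ^ 2 * (if |((x + sg b : ℤ) : ℝ)| ≤ β then
        ((Finset.univ.filter fun s : Fin n → Bool =>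
          GoodW β (x + sg b) (List.ofFn s)).card : ℝ) else 0) ≤
        (2 * (1 - 1 / (2 * (β + 1) ^ 2))) ^ n * (2 * (β + 1) ^ 2 - ((x + sg b : ℤ) : ℝ) ^ 2) := by
      intro b
      split_ifs with hb
      · exact ih _ hb
      · rw [mul_zero]
        apply mul_nonneg (pow_nonneg hρ n)
        have h1 : |((x + sg b : ℤ) : ℝ)| ≤ β + 1 := by
          push_cast
          refine (abs_add_le _ _).trans (add_le_add hx ?_)
          cases b <;> simp [sg]
        have := hu _ h1
        linarith
    refine (Finset.sum_le_sum fun b _ => hterm b).trans ?_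
    rw [← Finset.mul_sum, pow_succ _ n, mul_assoc]
    refine mul_le_mul_of_nonneg_left ?_ (pow_nonneg hρ n)
    simp only [Fintype.sum_bool, sg]
    push_cast
    have e : 2 * (1 - 1 / (2 * (β + 1) ^ 2)) * (2 * (β + 1) ^ 2 - (x : ℝ) ^ 2) =
        2 * (2 * (β + 1) ^ 2 - (x : ℝ) ^ 2) - 2 + (x : ℝ) ^ 2 / (β + 1) ^ 2 := by
      field_simp; ring
    rw [e]
    have : 0 ≤ (x : ℝ) ^ 2 / (β + 1) ^ 2 := by positivity
    simp
    nlinarith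

theorem count_goodW_zero (β : ℝ) (hβ : 0 ≤ β) (n : ℕ) :
    haveI := Classical.decPred fun s : Fin n → Bool => GoodW β 0 (List.ofFn s)
    ((Finset.univ.filter fun s : Fin n → Bool => GoodW β 0 (List.ofFn s)).card : ℝ) ≤
      2 * 2 ^ n * Real.exp (-(n / (2 * (β + 1) ^ 2))) := by
  have h := count_goodW β hβ n 0 (by simpa using hβ)
  have hA : 0 < (β + 1) ^ 2 := by positivity
  have hA1 : 1 ≤ (β + 1) ^ 2 := by nlinarith
  have h1 : 0 ≤ 1 - 1 / (2 * (β + 1) ^ 2) := by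
    have : 1 / (2 * (β + 1) ^ 2) ≤ 1 := by
      rw [div_le_one (by positivity)]; linarith
    linarith
  have h2 : (1 - 1 / (2 * (β + 1) ^ 2)) ^ n ≤ Real.exp (-(n / (2 * (β + 1) ^ 2))) := by
    have := Real.one_sub_le_exp_neg (1 / (2 * (β + 1) ^ 2))
    calc _ ≤ (Real.exp (-(1 / (2 * (β + 1) ^ 2)))) ^ n := by gcongr
      _ = _ := by rw [← Real.exp_nat_mul]; congr 1; ring
  have h3 : (β + 1) ^ 2 * ((2 * 2 ^ n) * (1 - 1 / (2 * (β + 1) ^ 2)) ^ n) =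
    (2 * (1 - 1 / (2 * (β + 1) ^ 2))) ^ n * (2 * (β + 1) ^ 2 - ((0 : ℤ) : ℝ) ^ 2) := by
    rw [mul_pow]; push_cast; ring
  rw [← h3] at h
  have h4 := le_of_mul_le_mul_left h hA
  refine le_trans ?_ (h4.trans (by gcongr))
  apply le_of_eq
  congr!

theorem card_fiber {ι : Type*} [Fintype ι] [DecidableEq ι] (h : ℕ) (s : ι → Bool) :
    (Finset.univ.filter fun e : ι ≃ (Fin h ⊕ Fin h) =>
      (fun i => (e i).isLeft) = s).card ≤ h.factorial * h.factorial := by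
  classical
  rcases Finset.eq_empty_or_nonempty (Finset.univ.filter fun e : ι ≃ (Fin h ⊕ Fin h) =>
      (fun i => (e i).isLeft) = s) with h0 | ⟨e0, he0⟩
  · rw [h0]; simp
  · have hst := DomMulAct.stabilizer_card (fun u : Fin h ⊕ Fin h => u.isLeft)
    have hl : Fintype.card {a : Fin h ⊕ Fin h // a.isLeft = true} = h := by
      rw [Fintype.card_subtype, Finset.card_filter, Fintype.sum_sum_type]
      simp
    have hr : Fintype.card {a : Fin h ⊕ Fin h // a.isLeft = false} = h := by
      rw [Fintype.card_subtype, Finset.card_filter, Fintype.sum_sum_type]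
      simp
    rw [Fintype.prod_bool, hl, hr] at hst
    rw [← hst, Fintype.card_subtype]
    refine Finset.card_le_card_of_injOn (fun e => e0.symm.trans e) ?_ ?_
    · intro e he
      simp only [Finset.coe_filter, Finset.mem_univ, true_and, Set.mem_ofPred_eq,
        Finset.mem_filter] at he he0 ⊢
      funext u
      have h1 := congrFun (he.trans he0.symm) (e0.symm u)
      simpa using h1
    · intro e _ e' _ hee
      ext i
      have := Equiv.congr_fun hee (e0 i)
      simpa using this

open Classical in
/-- Indices of `y`-variables in a list. -/
def Yl {h : ℕ} (l : List (Fin h ⊕ Fin h)) : Finset (Fin h) :=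
  Finset.univ.filter fun i => Sum.inl i ∈ l

open Classical in
/-- Indices of `z`-variables in a list. -/
def Zl {h : ℕ} (l : List (Fin h ⊕ Fin h)) : Finset (Fin h) :=
  Finset.univ.filter fun i => Sum.inr i ∈ l

theorem Yl_card {h : ℕ} (l : List (Fin h ⊕ Fin h)) (hl : l.Nodup) :
    (Yl l).card = l.countP Sum.isLeft := by
  induction l with
  | nil => simp [Yl]
  | cons a l ih =>
    rw [List.nodup_cons] at hl
    have ih := ih hl.2
    rcases a with i | i
    · have : Yl (Sum.inl i :: l) = insert i (Yl l) := by
        ext j; simp [Yl]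
      rw [this, Finset.card_insert_of_notMem (by simpa [Yl] using hl.1), ih,
        List.countP_cons_of_pos (by simp)]
    · have : Yl (Sum.inr i :: l) = Yl l := by
        ext j; simp [Yl]
      rw [this, ih]
      simp

theorem Zl_card {h : ℕ} (l : List (Fin h ⊕ Fin h)) (hl : l.Nodup) :
    (Zl l).card = l.countP Sum.isRight := by
  induction l with
  | nil => simp [Zl]
  | cons a l ih =>
    rw [List.nodup_cons] at hl
    have ih := ih hl.2
    rcases a with i | i
    · have : Zl (Sum.inl i :: l) = Zl l := by
        ext j; simp [Zl]
      rw [this, ih]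
      simp
    · have : Zl (Sum.inr i :: l) = insert i (Zl l) := by
        ext j; simp [Zl]
      rw [this, Finset.card_insert_of_notMem (by simpa [Zl] using hl.1), ih,
        List.countP_cons_of_pos (by simp)]

theorem sg_sum {α β : Type*} (l : List (α ⊕ β)) :
    ((l.map Sum.isLeft).map sg).sum = (l.countP Sum.isLeft : ℤ) - l.countP Sum.isRight := by
  induction l with
  | nil => simp
  | cons a l ih =>
    rw [List.map_cons, List.map_cons, List.sum_cons, ih]
    rcases a with i | i
    · rw [List.countP_cons_of_pos (by simp), List.countP_cons_of_neg (by simp)]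
      simp only [sg, Sum.isLeft_inl, if_true]
      push_cast
      ring
    · rw [List.countP_cons_of_neg (by simp), List.countP_cons_of_pos (by simp)]
      have : sg (Sum.inr i : α ⊕ β).isLeft = -1 := rfl
      rw [this]
      push_cast
      ring

/-- Exponent vector of the monomial indexed by `S`, `T`. -/
def mST {h : ℕ} (S T : Finset (Fin h)) : (Fin h ⊕ Fin h) →₀ ℕ :=
  (∑ i ∈ S, Finsupp.single (Sum.inl i) 1) + ∑ j ∈ T, Finsupp.single (Sum.inr j) 1

theorem mST_inl {h : ℕ} (S T : Finset (Fin h)) (i : Fin h) :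
    mST S T (Sum.inl i) = if i ∈ S then 1 else 0 := by
  simp [mST, Finsupp.single_apply]

theorem mST_inr {h : ℕ} (S T : Finset (Fin h)) (i : Fin h) :
    mST S T (Sum.inr i) = if i ∈ T then 1 else 0 := by
  simp [mST, Finsupp.single_apply]

theorem layC_congr {h w : ℕ} {K : Type*}
    (L : List ((Fin h ⊕ Fin h) × Matrix (Fin w) (Fin w) K × Matrix (Fin w) (Fin w) K))
    (S T S' T' : Finset (Fin h)) (hS : ∀ i ∈ Yl (L.map Prod.fst), i ∈ S ↔ i ∈ S')
    (hT : ∀ i ∈ Zl (L.map Prod.fst), i ∈ T ↔ i ∈ T') :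
    L.map (layC (mST S T)) = L.map (layC (mST S' T')) := by
  apply List.map_congr_left
  rintro ⟨v, a, b⟩ hp
  have hv : v ∈ L.map Prod.fst := List.mem_map_of_mem hp
  simp only [layC]
  rcases v with i | i
  · have := hS i (by simpa [Yl] using hv)
    simp only [mST_inl, this]
  · have := hT i (by simpa [Zl] using hv)
    simp only [mST_inr, this]

theorem rank_cut {h w : ℕ} {K : Type*} [Field K] (hw : 0 < w)
    (L : List ((Fin h ⊕ Fin h) × Matrix (Fin w) (Fin w) K × Matrix (Fin w) (Fin w) K))
    (hnd : (L.map Prod.fst).Nodup) (hall : ∀ v, v ∈ L.map Prod.fst) (t : ℕ) :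
    ((pdm ((L.map layP).prod ⟨0, hw⟩ ⟨0, hw⟩)).rank : ℝ) ≤
      w * 2 ^ ((h : ℝ) -
        |((((((L.map Prod.fst).map Sum.isLeft).take t).map sg).sum : ℤ) : ℝ)|) := by
  classical
  set L1 := L.take t with hL1
  set L2 := L.drop t with hL2
  have hL : L1 ++ L2 = L := List.take_append_drop t L
  let p : Fin w → Finset (Fin h) → Finset (Fin h) → K := fun k S T =>
    (L1.map (layC (mST S T))).prod ⟨0, hw⟩ k
  let q : Fin w → Finset (Fin h) → Finset (Fin h) → K := fun k S T =>
    (L2.map (layC (mST S T))).prod k ⟨0, hw⟩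
  have hF : ∀ S T, pdm ((L.map layP).prod ⟨0, hw⟩ ⟨0, hw⟩) S T = ∑ k, p k S T * q k S T := by
    intro S T
    have h1 : pdm ((L.map layP).prod ⟨0, hw⟩ ⟨0, hw⟩) S T =
      coeff (mST S T) ((L.map layP).prod ⟨0, hw⟩ ⟨0, hw⟩) := rfl
    rw [h1, coeff_layers L hnd, if_pos fun x _ => hall x]
    · rw [← hL, List.map_append, List.prod_append, Matrix.mul_apply]
    · rintro (i | i)
      · rw [mST_inl]; split_ifs <;> simp
      · rw [mST_inr]; split_ifs <;> simp
  have r1 := rank_factor _ p q (Zl (L1.map Prod.fst)) (Yl (L2.map Prod.fst)) hF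
    (by
      intro k S T
      simp only [p]
      rw [layC_congr L1 S T S (T ∩ Zl (L1.map Prod.fst)) (by simp)
        (fun i hi => by simp [hi])])
    (by
      intro k S T
      simp only [q]
      rw [layC_congr L2 S T (S ∩ Yl (L2.map Prod.fst)) T (fun i hi => by simp [hi])
        (by simp)])
  have r2 := rank_factor (pdm ((L.map layP).prod ⟨0, hw⟩ ⟨0, hw⟩)) q p (Zl (L2.map Prod.fst)) (Yl (L1.map Prod.fst))
    (by intro S T; rw [hF]; exact Finset.sum_congr rfl fun k _ => mul_comm _ _)
    (by
      intro k S T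
      simp only [q]
      rw [layC_congr L2 S T S (T ∩ Zl (L2.map Prod.fst)) (by simp)
        (fun i hi => by simp [hi])])
    (by
      intro k S T
      simp only [p]
      rw [layC_congr L1 S T (S ∩ Yl (L1.map Prod.fst)) T (fun i hi => by simp [hi])
        (by simp)])
  have hLm : L1.map Prod.fst ++ L2.map Prod.fst = L.map Prod.fst := by
    rw [← List.map_append, hL]
  have hnd' := hnd
  rw [← hLm] at hnd'
  have hn1 := (List.nodup_append.1 hnd').1
  have hn2 := (List.nodup_append.1 hnd').2.1
  have hY : (Yl (L1.map Prod.fst)).card + (Yl (L2.map Prod.fst)).card = h := by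
    rw [Yl_card _ hn1, Yl_card _ hn2, ← List.countP_append, hLm, ← Yl_card _ hnd]
    have : Yl (L.map Prod.fst) = Finset.univ := by
      ext i; simp only [Yl, hall, Finset.filter_true]
    rw [this]; simp
  have hZ : (Zl (L1.map Prod.fst)).card + (Zl (L2.map Prod.fst)).card = h := by
    rw [Zl_card _ hn1, Zl_card _ hn2, ← List.countP_append, hLm, ← Zl_card _ hnd]
    have : Zl (L.map Prod.fst) = Finset.univ := by
      ext i; simp only [Zl, hall, Finset.filter_true]
    rw [this]; simp
  have hd : ((((L.map Prod.fst).map Sum.isLeft).take t).map sg).sum =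
      ((Yl (L1.map Prod.fst)).card : ℤ) - (Zl (L1.map Prod.fst)).card := by
    rw [← List.map_take, ← List.map_take, sg_sum, Yl_card _ hn1, Zl_card _ hn1]
  rw [hd]
  have fin : ∀ n : ℕ, (n : ℝ) = h - |((((Yl (L1.map Prod.fst)).card : ℤ) -
      (Zl (L1.map Prod.fst)).card : ℤ) : ℝ)| →
      (pdm ((L.map layP).prod ⟨0, hw⟩ ⟨0, hw⟩)).rank ≤ w * 2 ^ n →
      ((pdm ((L.map layP).prod ⟨0, hw⟩ ⟨0, hw⟩)).rank : ℝ) ≤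
      w * 2 ^ ((h : ℝ) - |((((Yl (L1.map Prod.fst)).card : ℤ) -
        (Zl (L1.map Prod.fst)).card : ℤ) : ℝ)|) := by
    intro n hn hr
    rw [← hn, Real.rpow_natCast]
    exact_mod_cast hr
  have hYr : ((Yl (L1.map Prod.fst)).card : ℝ) + (Yl (L2.map Prod.fst)).card = h := by
    exact_mod_cast hY
  have hZr : ((Zl (L1.map Prod.fst)).card : ℝ) + (Zl (L2.map Prod.fst)).card = h := by
    exact_mod_cast hZ
  rcases le_total ((Zl (L1.map Prod.fst)).card : ℝ) ((Yl (L1.map Prod.fst)).card : ℝ) with hc | hc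
  · refine fin _ ?_ r1
    push_cast
    rw [abs_of_nonneg (by linarith)]
    linarith
  · refine fin _ ?_ r2
    push_cast
    rw [abs_of_nonpos (by linarith)]
    linarith

theorem asymp : ∃ N₀ : ℕ, 32 ≤ N₀ ∧ ∀ N : ℕ, N₀ ≤ N →
    (N : ℝ) * (2 * Real.exp (-(N / (2 * ((N : ℝ) ^ ((1 : ℝ) / 5) / 2 + 1) ^ 2)))) ≤
      (2 : ℝ) ^ (-(1 * Real.sqrt N * Real.logb 2 N)) := by
  have h1 := (isLittleO_log_rpow_atTop (r := 1 / 10) (by norm_num)).bound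
    (show (0 : ℝ) < 1 / 8 by norm_num)
  have h2 := tendsto_natCast_atTop_atTop (R := ℝ) |>.eventually h1
  obtain ⟨N₁, hN₁⟩ := Filter.eventually_atTop.1 h2
  refine ⟨max 32 N₁, le_max_left _ _, fun N hN => ?_⟩
  have h32 : (32 : ℝ) ≤ N := by exact_mod_cast (le_max_left _ _).trans hN
  have hlog := hN₁ N ((le_max_right _ _).trans hN)
  have hN0 : (0 : ℝ) < N := by linarith
  have hl0 : 0 ≤ Real.log N := Real.log_nonneg (by linarith)
  rw [Real.norm_of_nonneg hl0, Real.norm_of_nonneg (by positivity)] at hlog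
  have e1 : (2 : ℝ) ^ (-(1 * Real.sqrt N * Real.logb 2 N)) =
      Real.exp (-(Real.sqrt N * Real.log N)) := by
    rw [Real.rpow_def_of_pos (by norm_num), Real.logb]
    congr 1
    have : Real.log 2 ≠ 0 := (Real.log_pos (by norm_num)).ne'
    field_simp
  have e2 : (N : ℝ) * 2 = Real.exp (Real.log N + Real.log 2) := by
    rw [Real.exp_add, Real.exp_log hN0, Real.exp_log (by norm_num)]
  have hsq : Real.sqrt N = (N : ℝ) ^ ((1 : ℝ) / 2) := Real.sqrt_eq_rpow _
  have hs1 : 1 ≤ Real.sqrt N := Real.one_le_sqrt.2 (by linarith)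
  have h6 : (N : ℝ) ^ ((1 : ℝ) / 2) * (N : ℝ) ^ ((1 : ℝ) / 10) = (N : ℝ) ^ ((3 : ℝ) / 5) := by
    rw [← Real.rpow_add hN0]; norm_num
  have hA : ((N : ℝ) ^ ((1 : ℝ) / 5) / 2 + 1) ^ 2 ≤ (N : ℝ) ^ ((2 : ℝ) / 5) := by
    have h5 : 2 ≤ (N : ℝ) ^ ((1 : ℝ) / 5) := by
      have : (2 : ℝ) = 32 ^ ((1 : ℝ) / 5) := by
        rw [show (32 : ℝ) = 2 ^ (5 : ℝ) by norm_num, ← Real.rpow_mul (by norm_num)]; norm_num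
      rw [this]
      gcongr
    calc _ ≤ ((N : ℝ) ^ ((1 : ℝ) / 5)) ^ 2 := by gcongr; linarith
      _ = _ := by rw [← Real.rpow_natCast, ← Real.rpow_mul hN0.le]; norm_num
  have hE : (N : ℝ) ^ ((3 : ℝ) / 5) / 2 ≤ N / (2 * ((N : ℝ) ^ ((1 : ℝ) / 5) / 2 + 1) ^ 2) := by
    rw [le_div_iff₀ (by positivity)]
    have h7 : (N : ℝ) ^ ((3 : ℝ) / 5) * (N : ℝ) ^ ((2 : ℝ) / 5) = N := by
      rw [← Real.rpow_add hN0]; norm_num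
    calc _ = (N : ℝ) ^ ((3 : ℝ) / 5) * ((N : ℝ) ^ ((1 : ℝ) / 5) / 2 + 1) ^ 2 := by ring
      _ ≤ (N : ℝ) ^ ((3 : ℝ) / 5) * (N : ℝ) ^ ((2 : ℝ) / 5) := by gcongr
      _ = N := h7
  rw [← mul_assoc, e1, e2, ← Real.exp_add]
  apply Real.exp_le_exp.2
  have hm : Real.sqrt N * Real.log N ≤ 1 / 8 * (N : ℝ) ^ ((3 : ℝ) / 5) := by
    rw [← h6, hsq]
    calc _ ≤ (N : ℝ) ^ ((1 : ℝ) / 2) * (1 / 8 * (N : ℝ) ^ ((1 : ℝ) / 10)) := by gcongr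
      _ = _ := by ring
  have hl2 : Real.log 2 ≤ Real.log N := Real.log_le_log (by norm_num) (by linarith)
  have hl3 : Real.log N ≤ Real.sqrt N * Real.log N := le_mul_of_one_le_left hl0 hs1
  linarith

theorem unifProb_ge {Ω Λ : Type*} [Fintype Ω] [Fintype Λ] [DecidableEq Λ] [Nonempty Ω]
    (p : Ω → Prop) (f : Ω → Λ)
    (bad : Finset Λ) (n : ℕ) (hbad : ∀ e, ¬ p e → f e ∈ bad)
    (hfib : ∀ s, (Finset.univ.filter fun e => f e = s).card ≤ n) :
    1 - (n * bad.card : ℝ) / Fintype.card Ω ≤ unifProb p := by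
  classical
  have h1 : (Finset.univ.filter fun e => ¬ p e).card ≤ n * bad.card := by
    refine Finset.card_le_mul_card_image_of_maps_to (f := f) (fun e he => hbad e (by simpa using he))
      n fun s _ => le_trans (Finset.card_le_card ?_) (hfib s)
    intro e he
    simp only [Finset.mem_filter, Finset.mem_univ, true_and] at he ⊢
    exact he.2
  have h2 := Finset.card_filter_add_card_filter_not (s := (Finset.univ : Finset Ω)) p
  rw [Finset.card_univ] at h2
  have hpos : (0 : ℝ) < Fintype.card Ω := by exact_mod_cast Fintype.card_pos
  have h3 : unifProb p = ((Finset.univ.filter p).card : ℝ) / Fintype.card Ω := by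
    unfold unifProb
    congr!
  rw [h3, sub_le_iff_le_add, ← add_div, le_div_iff₀ hpos, one_mul]
  have h1' : ((Finset.univ.filter fun e => ¬ p e).card : ℝ) ≤ n * bad.card := by exact_mod_cast h1
  have h2' : ((Finset.univ.filter p).card : ℝ) + (Finset.univ.filter fun e => ¬ p e).card =
    Fintype.card Ω := by exact_mod_cast h2
  linarith

theorem fact_ratio (h : ℕ) (hh : 0 < h) (X : ℝ) (hX : 0 ≤ X) :
    ((h.factorial * h.factorial : ℕ) : ℝ) * (2 ^ (2 * h) * X) / (2 * h).factorial ≤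
      ((2 * h : ℕ) : ℝ) * X := by
  have h1 := Nat.four_pow_le_two_mul_self_mul_centralBinom h hh
  have h2 : h.centralBinom * (h.factorial * h.factorial) = (2 * h).factorial := by
    have := Nat.choose_mul_factorial_mul_factorial (show h ≤ 2 * h by omega)
    rw [show 2 * h - h = h by omega] at this
    rw [Nat.centralBinom_eq_two_mul_choose, ← this, mul_assoc]
  have hp : (0 : ℝ) < (2 * h).factorial := by exact_mod_cast Nat.factorial_pos _
  rw [div_le_iff₀ hp]
  have h3 : h.factorial * h.factorial * 2 ^ (2 * h) ≤ 2 * h * (2 * h).factorial := by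
    rw [← h2, pow_mul]
    calc _ ≤ h.factorial * h.factorial * (2 * h * h.centralBinom) := Nat.mul_le_mul_left _ h1
      _ = _ := by ring
  have h4 : ((h.factorial * h.factorial : ℕ) : ℝ) * 2 ^ (2 * h) ≤
      ((2 * h : ℕ) : ℝ) * (2 * h).factorial := by exact_mod_cast h3
  nlinarith

theorem rename_layers {K : Type*} [Field K] {N w : ℕ} {V : Type*} (g : ℕ → V) (hw : 0 < w)
    (π : ℕ → ℕ) (M : Fin N → Matrix (Fin w) (Fin w) (MvPolynomial ℕ K))
    (a b : Fin N → Matrix (Fin w) (Fin w) K)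
    (hM : ∀ l i j, M l i j = C (a l i j) + C (b l i j) * X (π (l.val + 1))) :
    rename g (mprodVal hw M) =
      ((List.ofFn fun l : Fin N => (g (π (l.val + 1)), a l, b l)).map layP).prod ⟨0, hw⟩ ⟨0, hw⟩ := by
  have h1 : rename g (mprodVal hw M) =
      ((rename g : MvPolynomial ℕ K →ₐ[K] MvPolynomial V K).toRingHom.mapMatrix
        (List.ofFn M).prod) ⟨0, hw⟩ ⟨0, hw⟩ := rfl
  rw [h1, map_list_prod, List.map_ofFn, List.map_ofFn]
  congr! 3
  funext l
  ext1 i j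
  simp [layP, hM]

/-- With high probability under a random partition, the partial derivative matrix of a
polynomial computed by an ROABP has low rank. -/
theorem roabp_rank_upper_bound :
    ∃ c c' : ℝ, 0 < c ∧ 0 < c' ∧ ∃ N₀ : ℕ, ∀ (K : Type) [Field K] (N h : ℕ),
      N₀ ≤ N → N = 2 * h → ∀ (hh : 0 < h),
      ∀ (w : ℕ) (hw : 2 ≤ w) (π : ℕ → ℕ)
        (M : Fin N → Matrix (Fin w) (Fin w) (MvPolynomial ℕ K)),
        IsROABP N w π M →
        1 - (2 : ℝ) ^ (-(c' * Real.sqrt N * Real.logb 2 N)) ≤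
          unifProb (fun e : {x // x ∈ Finset.Icc 1 N} ≃ (Fin h ⊕ Fin h) =>
            (((pdm (rename (extPart hh (Finset.Icc 1 N) (fun x => e x))
                  (mprodVal (show 0 < w by omega) M))).rank : ℝ) ≤
              (w : ℝ) ^ (c * Real.logb 2 N) *
                2 ^ ((N : ℝ)/2 - (N : ℝ) ^ ((1 : ℝ)/5) / 2))) := by
  obtain ⟨N₀, hN₀, hasymp⟩ := asymp
  refine ⟨1, 1, one_pos, one_pos, N₀, ?_⟩
  intro K _ N h hN hNh hh w hw π M hM
  classical
  obtain ⟨hπ, hM⟩ := hM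
  choose a b hab using hM
  set β : ℝ := (N : ℝ) ^ ((1 : ℝ) / 5) / 2 with hβdef
  have hβ : 0 ≤ β := by positivity
  -- the order as a bijection
  let σ : Fin N → {x // x ∈ Finset.Icc 1 N} := fun l => ⟨π (l.val + 1), by
    have := hπ.mapsTo (show l.val + 1 ∈ Set.Icc 1 N from ⟨by omega, by omega⟩)
    simpa using this⟩
  have hσi : Function.Injective σ := by
    intro l l' hl
    have h1 : π (l.val + 1) = π (l'.val + 1) := congrArg Subtype.val hl
    have := hπ.injOn (show l.val + 1 ∈ Set.Icc 1 N from ⟨by omega, by omega⟩)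
      (show l'.val + 1 ∈ Set.Icc 1 N from ⟨by omega, by omega⟩) h1
    exact Fin.ext (by omega)
  have hσs : Function.Surjective σ := by
    rintro ⟨x, hx⟩
    obtain ⟨y, hy, hyx⟩ := hπ.surjOn (show x ∈ Set.Icc 1 N by simpa using hx)
    exact ⟨⟨y - 1, by have := hy.1; have := hy.2; omega⟩, Subtype.ext (by
      simp only [σ]; rw [Nat.sub_add_cancel hy.1, hyx])⟩
  have hcardN : Fintype.card (Finset.Icc 1 N) = N := by simp
  let e₀ : {x // x ∈ Finset.Icc 1 N} ≃ (Fin h ⊕ Fin h) :=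
    Fintype.equivOfCardEq (by rw [hcardN]; simp; omega)
  have : Nonempty ({x // x ∈ Finset.Icc 1 N} ≃ (Fin h ⊕ Fin h)) := ⟨e₀⟩
  have hcardE := Fintype.card_equiv e₀
  rw [hcardN] at hcardE
  have hprob := unifProb_ge (fun e : {x // x ∈ Finset.Icc 1 N} ≃ (Fin h ⊕ Fin h) =>
            (((pdm (rename (extPart hh (Finset.Icc 1 N) (fun x => e x))
                  (mprodVal (show 0 < w by omega) M))).rank : ℝ) ≤
              (w : ℝ) ^ (1 * Real.logb 2 N) *
                2 ^ ((N : ℝ)/2 - β)))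
    (fun e => (fun l : Fin N => (e (σ l)).isLeft))
    (Finset.univ.filter fun s : Fin N → Bool => GoodW β 0 (List.ofFn s))
    (h.factorial * h.factorial) ?_ ?_
  · refine le_trans ?_ hprob
    apply sub_le_sub_left
    rw [hcardE]
    have hc := count_goodW_zero β hβ N
    have hc' : ((Finset.univ.filter fun s : Fin N → Bool => GoodW β 0 (List.ofFn s)).card : ℝ) ≤
        2 ^ N * (2 * Real.exp (-(N / (2 * (β + 1) ^ 2)))) := by
      refine le_trans (le_of_eq ?_) (hc.trans (le_of_eq (by ring)))
      congr!
    have hr := fact_ratio h hh (2 * Real.exp (-(N / (2 * (β + 1) ^ 2)))) (by positivity)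
    rw [← hNh] at hr
    refine le_trans ?_ (hr.trans (hasymp N hN))
    gcongr
  · intro e he
    simp only [Finset.mem_filter, Finset.mem_univ, true_and]
    by_contra hg
    apply he
    obtain ⟨t, _, ht⟩ := not_goodW β _ 0 hg
    have hw0 : 0 < w := by omega
    have hren := rename_layers (extPart hh (Finset.Icc 1 N) (fun x => e x)) hw0 π M
      (fun l => Matrix.of (a l)) (fun l => Matrix.of (b l)) (fun l i j => hab l i j)
    have hv : ∀ l : Fin N, extPart hh (Finset.Icc 1 N) (fun x => e x) (π (l.val + 1)) = e (σ l) := by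
      intro l
      have := (σ l).2
      simp only [σ] at this ⊢
      rw [extPart, dif_pos this]
    simp only [hv] at hren
    set L := List.ofFn fun l : Fin N => (e (σ l), Matrix.of (a l), Matrix.of (b l)) with hL
    have hfst : L.map Prod.fst = List.ofFn fun l => e (σ l) := by
      rw [hL, List.map_ofFn]; rfl
    have hrk := rank_cut hw0 L
      (by rw [hfst, List.nodup_ofFn]; exact e.injective.comp hσi)
      (by
        intro v
        rw [hfst, List.mem_ofFn]
        obtain ⟨l, hl⟩ := hσs (e.symm v)
        exact ⟨l, by simp [hl]⟩) t
    rw [hren]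
    refine hrk.trans ?_
    have hs : (L.map Prod.fst).map Sum.isLeft = List.ofFn fun l => (e (σ l)).isLeft := by
      rw [hfst, List.map_ofFn]; rfl
    rw [hs]
    rw [zero_add] at ht
    have hNr : (N : ℝ) / 2 = h := by rw [hNh]; push_cast; ring
    have hw1 : (1 : ℝ) ≤ w := by exact_mod_cast hw0
    have h32 : (32 : ℝ) ≤ N := by exact_mod_cast hN₀.trans hN
    have hlog : 1 ≤ 1 * Real.logb 2 (N : ℝ) := by
      rw [one_mul, Real.le_logb_iff_rpow_le (by norm_num) (by linarith)]
      norm_num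
      linarith
    rw [hNr]
    apply mul_le_mul
    · calc (w : ℝ) = (w : ℝ) ^ (1 : ℝ) := (Real.rpow_one _).symm
        _ ≤ _ := Real.rpow_le_rpow_of_exponent_le hw1 hlog
    · apply Real.rpow_le_rpow_of_exponent_le (by norm_num)
      linarith
    · positivity
    · positivity
  · intro s
    let σe : Fin N ≃ {x // x ∈ Finset.Icc 1 N} := Equiv.ofBijective σ ⟨hσi, hσs⟩
    refine le_trans (le_of_eq ?_) (card_fiber h (fun x => s (σe.symm x)))
    congr 1
    ext e
    simp only [Finset.mem_filter, Finset.mem_univ, true_and]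
    constructor
    · intro he
      funext x
      have := congrFun he (σe.symm x)
      rw [← this]
      congr 2
      exact (σe.apply_symm_apply x).symm
    · intro he
      funext l
      have := congrFun he (σ l)
      rw [this]
      congr 1
      exact σe.symm_apply_apply l

end
end

section
/- There is a constant c > 0 such that for all sufficiently large even N the following holds. Let 1/10 < α ≤ 1/2 be such that d = ⌈N^α⌉ divides N, let X be a set of N variables partitioned into d pairwise disjoint sets X_1,…,X_d each of size N/d, and let k be an integer with 1 ≤ k ≤ N^{(1−α)/4}. Then, for φ drawn from D, the probability that at least one set X_i is k-unbalanced with respect to φ is at least 1 − 2^{−c·N^{1/10}·log N}. -/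
open MvPolynomial

noncomputable section

/-- `S ⊆ X` is `k`-unbalanced with respect to a partition given as a map on `X`. -/
def kUnbOn {h : ℕ} (X : Finset ℕ) (e : {x // x ∈ X} → Fin h ⊕ Fin h) (k : ℕ)
    (S : Finset ℕ) : Prop :=
  (k : ℤ) ≤ |((X.attach.filter fun x => x.1 ∈ S ∧ (e x).isLeft = true).card : ℤ) -
             ((X.attach.filter fun x => x.1 ∈ S ∧ (e x).isRight = true).card : ℤ)|


theorem aux_cb (n : ℕ) : n.centralBinom ^ 2 * (2 * n + 1) ≤ 16 ^ n := by
  induction n with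
  | zero => simp
  | succ n ih =>
    have h := Nat.succ_mul_centralBinom_succ n
    have h2 : (n + 1) ^ 2 * ((n + 1).centralBinom ^ 2 * (2 * (n + 1) + 1))
        ≤ (n + 1) ^ 2 * 16 ^ (n + 1) := by
      calc (n + 1) ^ 2 * ((n + 1).centralBinom ^ 2 * (2 * (n + 1) + 1))
          = ((n + 1) * (n + 1).centralBinom) ^ 2 * (2 * n + 3) := by ring
        _ = (n.centralBinom ^ 2 * (2 * n + 1)) * (4 * (2 * n + 1) * (2 * n + 3)) := by
          rw [h]; ring
        _ ≤ 16 ^ n * (4 * (2 * n + 1) * (2 * n + 3)) := Nat.mul_le_mul_right _ ih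
        _ ≤ 16 ^ n * (16 * (n + 1) ^ 2) := Nat.mul_le_mul_left _ (by nlinarith)
        _ = _ := by ring
    exact Nat.le_of_mul_le_mul_left h2 (by positivity)

theorem aux_choose (m : ℕ) : (m.choose (m / 2)) ^ 2 * m ≤ 4 ^ m := by
  rcases Nat.even_or_odd' m with ⟨n, rfl | rfl⟩
  · have h := aux_cb n
    rw [Nat.centralBinom] at h
    rw [Nat.mul_div_cancel_left _ (by norm_num), pow_mul]
    norm_num
    nlinarith
  · have h := aux_cb (n + 1)
    have e : (2 * n + 1) / 2 = n := by omega
    have h3 : (n + 1).centralBinom = 2 * (2 * n + 1).choose n := by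
      rw [Nat.centralBinom, show 2 * (n + 1) = (2 * n + 1) + 1 by ring, Nat.choose_succ_succ,
        Nat.choose_symm_half]
      ring
    rw [h3] at h
    rw [e]
    have : 4 ^ (2 * n + 1) = 4 * 16 ^ n := by rw [pow_succ, pow_mul]; norm_num; ring
    rw [this]
    have h' : (2 * (2 * n + 1).choose n) ^ 2 * (2 * (n + 1) + 1) =
        4 * ((2 * n + 1).choose n ^ 2 * (2 * n + 1)) + 8 * (2 * n + 1).choose n ^ 2 := by ring
    rw [h', pow_succ 16] at h
    have := Nat.zero_le ((2 * n + 1).choose n ^ 2)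
    omega

theorem aux_block {β : Type*} [DecidableEq β] (P : Finset β) (m k : ℕ) (hP : P.card = m) :
    (P.powerset.filter fun B => m < 2 * B.card + k ∧ 2 * B.card < m + k).card
      ≤ k * m.choose (m / 2) := by
  classical
  have hA : ((Finset.range (m + 1)).filter fun a => m < 2 * a + k ∧ 2 * a < m + k).card ≤ k := by
    conv_rhs => rw [← Finset.card_range k]
    apply Finset.card_le_card_of_injOn (fun a => (2 * a + k - m - 1) / 2)
    · intro a ha
      simp only [Finset.coe_filter, Finset.mem_range, Set.mem_ofPred_eq] at ha
      simp only [Finset.coe_range, Set.mem_Iio]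
      omega
    · intro a ha b hb hab
      simp only [Finset.coe_filter, Finset.mem_range, Set.mem_ofPred_eq] at ha hb
      simp only at hab
      omega
  calc _ ≤ (((Finset.range (m + 1)).filter fun a => m < 2 * a + k ∧ 2 * a < m + k).biUnion
        fun a => P.powersetCard a).card := by
        apply Finset.card_le_card
        intro B hB
        simp only [Finset.mem_filter, Finset.mem_powerset] at hB
        simp only [Finset.mem_biUnion, Finset.mem_filter, Finset.mem_range,
          Finset.mem_powersetCard]
        have := Finset.card_le_card hB.1
        exact ⟨B.card, ⟨by omega, hB.2⟩, hB.1, rfl⟩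
    _ ≤ _ * m.choose (m / 2) := by
        apply Finset.card_biUnion_le_card_mul
        intro a _
        rw [Finset.card_powersetCard, hP]
        exact Nat.choose_le_middle a m
    _ ≤ _ := Nat.mul_le_mul_right _ hA

theorem aux_perm (h : ℕ) (s : Finset (Equiv.Perm (Fin h ⊕ Fin h)))
    (hs : ∀ σ ∈ s, ∀ x, ((σ x).isLeft = true ↔ x.isLeft = true)) :
    s.card ≤ h.factorial * h.factorial := by
  classical
  have : s ⊆ (Finset.univ : Finset (Equiv.Perm (Fin h) × Equiv.Perm (Fin h))).image
      (Equiv.Perm.sumCongrHom (Fin h) (Fin h)) := by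
    intro σ hσ
    have : σ ∈ (Equiv.Perm.sumCongrHom (Fin h) (Fin h)).range := by
      apply Equiv.Perm.mem_sumCongrHom_range_of_perm_mapsTo_inl
      rintro _ ⟨x, rfl⟩
      have := (hs σ hσ (Sum.inl x)).2 rfl
      obtain ⟨y, hy⟩ := Sum.isLeft_iff.1 this
      exact ⟨y, hy.symm⟩
    obtain ⟨p, hp⟩ := this
    exact Finset.mem_image.2 ⟨p, Finset.mem_univ _, hp⟩
  refine (Finset.card_le_card this).trans (Finset.card_image_le.trans ?_)
  simp [Fintype.card_perm]

theorem aux_count (h d m k : ℕ) (X : Finset ℕ) (Xs : Fin d → Finset ℕ)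
    (hU : Finset.univ.biUnion Xs = X) (hc : ∀ i, (Xs i).card = m)
    (s : Finset ({x // x ∈ X} ≃ (Fin h ⊕ Fin h)))
    (hs : ∀ e ∈ s, ∀ i, ¬ kUnbOn X (fun x => e x) k (Xs i)) :
    s.card ≤ h.factorial * h.factorial * (k * m.choose (m / 2)) ^ d := by
  classical
  let P : Fin d → Finset {x // x ∈ X} := fun i => X.attach.filter fun x => x.1 ∈ Xs i
  let f : ({x // x ∈ X} ≃ (Fin h ⊕ Fin h)) → Fin d → Finset {x // x ∈ X} :=
    fun e i => X.attach.filter fun x => x.1 ∈ Xs i ∧ (e x).isLeft = true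
  have hsub : ∀ i, Xs i ⊆ X := fun i => hU ▸ Finset.subset_biUnion_of_mem Xs (Finset.mem_univ i)
  have hP : ∀ i, (P i).card = m := by
    intro i
    rw [← hc i]
    apply Finset.card_bij (fun x _ => x.1)
    · intro x hx; exact (Finset.mem_filter.1 hx).2
    · intro x _ y _ hxy; exact Subtype.ext hxy
    · intro x hx
      exact ⟨⟨x, hsub i hx⟩, Finset.mem_filter.2 ⟨Finset.mem_attach _ _, hx⟩, rfl⟩
  have himg : s.image f ⊆ Fintype.piFinset (fun i => (P i).powerset.filter
      fun B => m < 2 * B.card + k ∧ 2 * B.card < m + k) := by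
    intro g hg
    obtain ⟨e, he, rfl⟩ := Finset.mem_image.1 hg
    rw [Fintype.mem_piFinset]
    intro i
    have hk := hs e he i
    unfold kUnbOn at hk
    have hsum : (X.attach.filter fun x => x.1 ∈ Xs i ∧ (e x).isLeft = true).card +
        (X.attach.filter fun x => x.1 ∈ Xs i ∧ (e x).isRight = true).card = m := by
      rw [← hP i, ← Finset.card_filter_add_card_filter_not (s := P i)
        (fun x => (e x).isLeft = true), Finset.filter_filter, Finset.filter_filter]
      simp
    rw [Finset.mem_filter, Finset.mem_powerset]
    refine ⟨?_, ?_⟩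
    · intro x hx
      have := Finset.mem_filter.1 hx
      exact Finset.mem_filter.2 ⟨this.1, this.2.1⟩
    · show m < 2 * (X.attach.filter fun x => x.1 ∈ Xs i ∧ (e x).isLeft = true).card + k ∧
        2 * (X.attach.filter fun x => x.1 ∈ Xs i ∧ (e x).isLeft = true).card < m + k
      simp only [not_le, abs_lt] at hk
      omega
  have hfib : ∀ a ∈ s.image f, (s.filter fun e => f e = a).card ≤ h.factorial * h.factorial := by
    intro a ha
    obtain ⟨e0, he0, rfl⟩ := Finset.mem_image.1 ha
    rw [← Finset.card_image_of_injective _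
      (f := fun e : {x // x ∈ X} ≃ (Fin h ⊕ Fin h) => e0.symm.trans e)
      (fun e e' hee => by
        ext1 x
        have := Equiv.congr_fun hee (e0 x)
        simpa using this)]
    apply aux_perm
    intro σ hσ x
    obtain ⟨e, he, rfl⟩ := Finset.mem_image.1 hσ
    have hf := (Finset.mem_filter.1 he).2
    obtain ⟨y, rfl⟩ := e0.surjective x
    have hy : y.1 ∈ Finset.univ.biUnion Xs := hU.symm ▸ y.2
    obtain ⟨i, _, hi⟩ := Finset.mem_biUnion.1 hy
    have := congrArg (fun t => y ∈ t i) hf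
    simp only [f, Finset.mem_filter, Finset.mem_attach, hi, true_and, eq_iff_iff] at this
    simpa using this
  refine (Finset.card_le_mul_card_image s _ hfib).trans (Nat.mul_le_mul_left _ ?_)
  refine (Finset.card_le_card himg).trans ?_
  rw [Fintype.card_piFinset]
  refine (Finset.prod_le_pow_card _ _ (k * m.choose (m / 2)) fun i _ => ?_).trans ?_
  · exact aux_block (P i) m k (hP i)
  · simp

theorem aux_num (N h d m k : ℕ) (α : ℝ) (hN : 2 ^ 50 ≤ N) (hNh : N = 2 * h)
    (hα : 1/10 < α) (hα' : α ≤ 1/2) (hd : d = ⌈(N : ℝ) ^ α⌉₊) (hm : N = d * m)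
    (hk : (k : ℝ) ≤ (N : ℝ) ^ ((1 - α)/4)) :
    ((k * m.choose (m / 2)) ^ d : ℝ) ≤
      (2 : ℝ) ^ (-(1/32 * (N : ℝ) ^ ((1 : ℝ)/10) * Real.logb 2 N)) * h.centralBinom := by
  have hNr : (2:ℝ) ^ (50:ℕ) ≤ N := by exact_mod_cast hN
  have hN1 : (1:ℝ) ≤ N := le_trans (by norm_num) hNr
  have hN0 : (0:ℝ) < N := by linarith
  have hh : 0 < h := by
    have : 0 < N := by exact_mod_cast hN0
    omega
  have hdge : (N:ℝ) ^ α ≤ d := hd ▸ Nat.le_ceil _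
  have h1α : (1:ℝ) ≤ (N:ℝ) ^ α := Real.one_le_rpow hN1 (by linarith)
  have hdle : (d:ℝ) ≤ 2 * (N:ℝ) ^ α := by
    have := Nat.ceil_lt_add_one (a := (N:ℝ) ^ α) (by linarith)
    rw [← hd] at this
    linarith
  have hd10 : (N:ℝ) ^ ((1:ℝ)/10) ≤ d :=
    (Real.rpow_le_rpow_of_exponent_le hN1 hα.le).trans hdge
  have hd32 : (32:ℝ) ≤ d := by
    refine le_trans ?_ hd10
    calc (32:ℝ) = ((2:ℝ) ^ (50:ℕ)) ^ ((1:ℝ)/10) := by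
          rw [← Real.rpow_natCast, ← Real.rpow_mul (by norm_num)]
          norm_num
      _ ≤ _ := Real.rpow_le_rpow (by positivity) hNr (by norm_num)
  have hd0 : (0:ℝ) < d := by linarith
  have hmr : (N:ℝ) = d * m := by exact_mod_cast hm
  have hm0 : (0:ℝ) < m := by
    by_contra hcon
    have : (m:ℝ) = 0 := le_antisymm (not_lt.1 hcon) (Nat.cast_nonneg m)
    rw [this] at hmr; linarith
  have hNα : (N:ℝ) ^ (1-α) * (N:ℝ) ^ α = N := by
    rw [← Real.rpow_add hN0]; simp
  have hmge : (N:ℝ) ^ (1-α) ≤ 2 * m := by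
    have h2 : (N:ℝ) ^ (1-α) * (N:ℝ) ^ α ≤ (2 * m) * (N:ℝ) ^ α := by
      rw [hNα]
      nlinarith
    exact le_of_mul_le_mul_right h2 (by linarith)
  -- the key ratio
  set q : ℝ := (N:ℝ) ^ (-(1:ℝ)/16) with hq
  have hq0 : 0 < q := Real.rpow_pos_of_pos hN0 _
  have h2q : 2 * (N:ℝ) ^ (-(1-α)/2) ≤ q ^ 2 := by
    have e1 : q ^ 2 = (N:ℝ) ^ (-(1:ℝ)/8) := by
      rw [hq, ← Real.rpow_natCast, ← Real.rpow_mul hN0.le]; norm_num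
    have e2 : (N:ℝ) ^ (-(1-α)/2) ≤ (N:ℝ) ^ (-(1:ℝ)/4) :=
      Real.rpow_le_rpow_of_exponent_le hN1 (by linarith)
    have e3 : (N:ℝ) ^ (-(1:ℝ)/4) = (N:ℝ) ^ (-(1:ℝ)/8) * (N:ℝ) ^ (-(1:ℝ)/8) := by
      rw [← Real.rpow_add hN0]; norm_num
    have e4 : (N:ℝ) ^ (-(1:ℝ)/8) ≤ 1/2 := by
      have : (2:ℝ) ≤ (N:ℝ) ^ ((1:ℝ)/8) := by
        calc (2:ℝ) = ((2:ℝ) ^ (8:ℕ)) ^ ((1:ℝ)/8) := by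
              rw [← Real.rpow_natCast, ← Real.rpow_mul (by norm_num)]
              norm_num
          _ ≤ _ := Real.rpow_le_rpow (by positivity) (le_trans (by norm_num) hNr) (by norm_num)
      rw [show -(1:ℝ)/8 = -((1:ℝ)/8) by ring, Real.rpow_neg hN0.le, ← one_div]
      exact one_div_le_one_div_of_le (by norm_num) this
    have e5 : 0 < (N:ℝ) ^ (-(1:ℝ)/8) := Real.rpow_pos_of_pos hN0 _
    rw [e1]
    nlinarith
  have hk2 : (k:ℝ) ^ 2 ≤ q ^ 2 * m := by
    calc (k:ℝ) ^ 2 ≤ ((N : ℝ) ^ ((1 - α)/4)) ^ 2 := by gcongr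
      _ = (N:ℝ) ^ (-(1-α)/2) * (N:ℝ) ^ (1-α) := by
        rw [← Real.rpow_natCast, ← Real.rpow_mul hN0.le, ← Real.rpow_add hN0]
        congr 1; push_cast; ring
      _ ≤ (N:ℝ) ^ (-(1-α)/2) * (2 * m) := by gcongr
      _ = (2 * (N:ℝ) ^ (-(1-α)/2)) * m := by ring
      _ ≤ _ := by gcongr
  have hch : ((m.choose (m/2) : ℕ) : ℝ) ^ 2 * m ≤ 4 ^ m := by exact_mod_cast aux_choose m
  have hbase : (k:ℝ) * (m.choose (m/2) : ℕ) ≤ q * 2 ^ m := by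
    refine (sq_le_sq₀ (by positivity) (by positivity)).1 ?_
    calc ((k:ℝ) * (m.choose (m/2) : ℕ)) ^ 2 = (k:ℝ) ^ 2 * ((m.choose (m/2) : ℕ):ℝ) ^ 2 := by ring
      _ ≤ (q ^ 2 * m) * ((m.choose (m/2) : ℕ):ℝ) ^ 2 := by gcongr
      _ = q ^ 2 * (((m.choose (m/2) : ℕ):ℝ) ^ 2 * m) := by ring
      _ ≤ q ^ 2 * 4 ^ m := by gcongr
      _ = (q * 2 ^ m) ^ 2 := by
        rw [mul_pow, ← pow_mul, mul_comm m 2, pow_mul]; norm_num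
  have hcb : (2:ℝ) ^ N ≤ N * h.centralBinom := by
    have := Nat.four_pow_le_two_mul_self_mul_centralBinom h hh
    have h2 : (4:ℝ) ^ h ≤ 2 * h * h.centralBinom := by exact_mod_cast this
    have h3 : (N:ℝ) = 2 * h := by exact_mod_cast hNh
    rw [h3, hNh, pow_mul]; norm_num; exact h2
  have hqd : q ^ d = (N:ℝ) ^ (-(d:ℝ)/16) := by
    rw [hq, ← Real.rpow_natCast, ← Real.rpow_mul hN0.le]; congr 1; ring
  have htarget : (2 : ℝ) ^ (-(1/32 * (N : ℝ) ^ ((1 : ℝ)/10) * Real.logb 2 N)) =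
      (N:ℝ) ^ (-(1/32 * (N : ℝ) ^ ((1 : ℝ)/10))) := by
    rw [show -(1/32 * (N : ℝ) ^ ((1 : ℝ)/10) * Real.logb 2 N) =
      Real.logb 2 N * (-(1/32 * (N : ℝ) ^ ((1 : ℝ)/10))) by ring,
      Real.rpow_mul (by norm_num), Real.rpow_logb (by norm_num) (by norm_num) hN0]
  have hfin : q ^ d * N ≤ (N:ℝ) ^ (-(1/32 * (N : ℝ) ^ ((1 : ℝ)/10))) := by
    rw [hqd]
    nth_rewrite 2 [← Real.rpow_one (N:ℝ)]
    rw [← Real.rpow_add hN0]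
    apply Real.rpow_le_rpow_of_exponent_le hN1
    linarith
  rw [htarget]
  calc ((k * m.choose (m / 2)) ^ d : ℝ) ≤ (q * 2 ^ m) ^ d := by gcongr
    _ = q ^ d * 2 ^ N := by rw [mul_pow, ← pow_mul, mul_comm m d, ← hm]
    _ ≤ q ^ d * (N * h.centralBinom) := by gcongr
    _ = (q ^ d * N) * h.centralBinom := by ring
    _ ≤ _ := by gcongr

/-- With high probability under a random partition, one of the variable blocks of an
α-sparse ROABP is k-unbalanced. -/
theorem exists_unbalanced_sparse_block :
    ∃ c : ℝ, 0 < c ∧ ∃ N₀ : ℕ, ∀ (N h : ℕ), N₀ ≤ N → N = 2 * h →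
      ∀ (α : ℝ), 1/10 < α → α ≤ 1/2 →
      ∀ (d : ℕ), d = ⌈(N : ℝ) ^ α⌉₊ → d ∣ N →
      ∀ (X : Finset ℕ), X.card = N →
      ∀ (Xs : Fin d → Finset ℕ),
        (∀ i j, i ≠ j → Disjoint (Xs i) (Xs j)) →
        Finset.univ.biUnion Xs = X →
        (∀ i, (Xs i).card = N / d) →
      ∀ (k : ℕ), 1 ≤ k → (k : ℝ) ≤ (N : ℝ) ^ ((1 - α)/4) →
        1 - (2 : ℝ) ^ (-(c * (N : ℝ) ^ ((1 : ℝ)/10) * Real.logb 2 N)) ≤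
          unifProb (fun e : {x // x ∈ X} ≃ (Fin h ⊕ Fin h) =>
            ∃ i, kUnbOn X (fun x => e x) k (Xs i)) := by
  classical
  refine ⟨1/32, by norm_num, 2 ^ 50, ?_⟩
  intro N h hN hNh α hα hα' d hd hdvd X hX Xs _ hU hc k _ hk
  have hm : N = d * (N / d) := (Nat.mul_div_cancel' hdvd).symm
  have hnum := aux_num N h d (N / d) k α hN hNh hα hα' hd hm hk
  set B : ℝ := (2 : ℝ) ^ (-(1/32 * (N : ℝ) ^ ((1 : ℝ)/10) * Real.logb 2 N)) with hB
  set p : ({x // x ∈ X} ≃ (Fin h ⊕ Fin h)) → Prop :=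
    fun e => ∃ i, kUnbOn X (fun x => e x) k (Xs i) with hp
  have hcount := aux_count h d (N / d) k X Xs hU hc (Finset.univ.filter fun e => ¬ p e) (by
    intro e he i hi
    exact (Finset.mem_filter.1 he).2 ⟨i, hi⟩)
  have hcardX : Fintype.card {x // x ∈ X} = Fintype.card (Fin h ⊕ Fin h) := by
    simp [hX]; omega
  have htot : Fintype.card ({x // x ∈ X} ≃ (Fin h ⊕ Fin h)) =
      h.factorial * h.factorial * h.centralBinom := by
    rw [Fintype.card_equiv (Fintype.equivOfCardEq hcardX), Fintype.card_coe, hX, hNh,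
      Nat.centralBinom]
    have := Nat.choose_mul_factorial_mul_factorial (n := 2 * h) (k := h) (by omega)
    rw [show 2 * h - h = h by omega] at this
    rw [← this]; ring
  have hsplit := Finset.card_filter_add_card_filter_not
    (s := (Finset.univ : Finset ({x // x ∈ X} ≃ (Fin h ⊕ Fin h)))) p
  rw [Finset.card_univ] at hsplit
  have hcount' : ((Finset.univ.filter fun e => ¬ p e).card : ℝ) ≤
      B * (Fintype.card ({x // x ∈ X} ≃ (Fin h ⊕ Fin h)) : ℝ) := by
    calc ((Finset.univ.filter fun e => ¬ p e).card : ℝ)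
        ≤ ((h.factorial * h.factorial * (k * (N/d).choose ((N/d) / 2)) ^ d : ℕ) : ℝ) := by
          exact_mod_cast hcount
      _ = (h.factorial * h.factorial : ℝ) * (k * (N/d).choose ((N/d) / 2)) ^ d := by push_cast; rfl
      _ ≤ (h.factorial * h.factorial : ℝ) * (B * h.centralBinom) := by gcongr
      _ = _ := by rw [htot]; push_cast; ring
  have hpos : (0:ℝ) < Fintype.card ({x // x ∈ X} ≃ (Fin h ⊕ Fin h)) := by
    rw [htot]
    have := Nat.centralBinom_pos h
    have := Nat.factorial_pos h
    positivity
  have hsplit' : ((Finset.univ.filter p).card : ℝ) + ((Finset.univ.filter fun e => ¬ p e).card : ℝ)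
      = Fintype.card ({x // x ∈ X} ≃ (Fin h ⊕ Fin h)) := by exact_mod_cast hsplit
  have hgoal : 1 - B ≤ ((Finset.univ.filter p).card : ℝ) /
      (Fintype.card ({x // x ∈ X} ≃ (Fin h ⊕ Fin h)) : ℝ) := by
    rw [le_div_iff₀ hpos]
    linarith
  unfold unifProb
  convert hgoal using 3
  congr!

end
end

section
/- There are constants c, c' > 0 such that for all sufficiently large even N, every 1/10 < α ≤ 1/2 with d = ⌈N^α⌉ dividing N, and every field K the following holds. If f ∈ K[x_1,…,x_N] is computed by an α-sparse ROABP of width w ≥ 2 and sparsity t, then for φ drawn from D, with probability at least 1 − 2^{−c'·N^{1/10}·log N} one has rank(M_{f^φ}) ≤ w^{c·log N}·t·2^{N/2 − N^{(1−α)/4}/2}. -/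
open MvPolynomial

noncomputable section

/-- Rank is at most the number of rows that may be nonzero. -/
lemma rank_le_card_rows {K : Type*} [Field K] {m n : Type*} [Fintype m] [Fintype n]
    [DecidableEq m] (A : Matrix m n K) (R : Finset m) (hR : ∀ i ∉ R, ∀ j, A i j = 0) :
    A.rank ≤ R.card := by
  classical
  rw [Matrix.rank_eq_finrank_span_row]
  have h1 : Submodule.span K (Set.range A.row) ≤
      Submodule.span K ((R.image A.row : Finset (n → K)) : Set (n → K)) := by
    rw [Submodule.span_le]
    rintro _ ⟨i, rfl⟩
    by_cases hi : i ∈ R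
    · exact Submodule.subset_span (by simpa using ⟨i, hi, rfl⟩)
    · have : A.row i = 0 := by
        funext j
        exact hR i hi j
      rw [this]
      exact Submodule.zero_mem _
  calc _ ≤ _ := Submodule.finrank_mono h1
    _ ≤ (R.image A.row).card := finrank_span_finset_le_card _
    _ ≤ R.card := Finset.card_image_le

/-- Entries of a product of matrices with entries in a subalgebra lie in the subalgebra. -/
lemma matrix_list_prod_mem {K R : Type*} [CommSemiring K] [CommSemiring R] [Algebra K R] {w : ℕ}
    (S : Subalgebra K R) (L : List (Matrix (Fin w) (Fin w) R))
    (hL : ∀ A ∈ L, ∀ i j, A i j ∈ S) : ∀ i j, L.prod i j ∈ S := by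
  induction L with
  | nil =>
    intro i j
    rw [List.prod_nil, Matrix.one_apply]
    split_ifs
    · exact S.one_mem
    · exact S.zero_mem
  | cons A L ih =>
    intro i j
    rw [List.prod_cons, Matrix.mul_apply]
    refine S.sum_mem fun k _ => S.mul_mem (hL A (by simp) _ _) ?_
    exact ih (fun B hB => hL B (by simp [hB])) _ _

lemma support_of_supported {K : Type*} [CommSemiring K] {s : Set ℕ} {f : MvPolynomial ℕ K}
    (hf : f ∈ MvPolynomial.supported K s) {u : ℕ →₀ ℕ} (hu : u ∈ f.support) {x : ℕ}
    (hx : x ∉ s) : u x = 0 := by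
  rw [MvPolynomial.mem_supported] at hf
  by_contra h
  exact hx (hf (by
    rw [Finset.mem_coe, MvPolynomial.mem_vars_iff_mem_support]
    exact ⟨u, hu, by simpa using h⟩))

/-- The traces on the first block of the monomials of the output lie in a small set. -/
lemma exists_traces {K : Type*} [Field K] {d w t : ℕ} (hw : 0 < w)
    (Xs : Fin (d + 1) → Finset ℕ) (hdis : ∀ i j, i ≠ j → Disjoint (Xs i) (Xs j))
    (M : Fin (d + 1) → Matrix (Fin w) (Fin w) (MvPolynomial ℕ K))
    (hM : IsSparseROABP w t Xs M) :
    ∃ A : Finset (ℕ →₀ ℕ), A.card ≤ w * t ∧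
      ∀ u ∈ (mprodVal hw M).support, ∃ a ∈ A, ∀ x ∈ Xs 0, u x = a x := by
  classical
  refine ⟨Finset.univ.biUnion fun b => (M 0 ⟨0, hw⟩ b).support, ?_, ?_⟩
  · calc _ ≤ ∑ b : Fin w, (M 0 ⟨0, hw⟩ b).support.card := Finset.card_biUnion_le
      _ ≤ ∑ _b : Fin w, t := Finset.sum_le_sum fun b _ => (hM 0 _ b).2.2
      _ = w * t := by simp
  · intro u hu
    unfold mprodVal at hu
    rw [List.ofFn_succ, List.prod_cons, Matrix.mul_apply] at hu
    obtain ⟨b, -, hb⟩ := Finset.mem_biUnion.1 (MvPolynomial.support_sum hu)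
    obtain ⟨a, ha, r, hr, rfl⟩ := Finset.mem_add.1 (MvPolynomial.support_mul _ _ hb)
    refine ⟨a, Finset.mem_biUnion.2 ⟨b, Finset.mem_univ _, ha⟩, fun x hx => ?_⟩
    have hsup := matrix_list_prod_mem (MvPolynomial.supported K {x : ℕ | x ∉ Xs 0})
      (List.ofFn fun i : Fin d => M i.succ) (by
        intro B hB i j
        obtain ⟨k, rfl⟩ := (List.mem_ofFn' _ _).1 hB
        rw [MvPolynomial.mem_supported]
        intro y hy hy0
        exact Finset.disjoint_left.1 (hdis 0 k.succ (Fin.succ_ne_zero k).symm) hy0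
          ((hM k.succ i j).2.1 hy)) b ⟨0, hw⟩
    have : r x = 0 := support_of_supported hsup hr (by simpa using hx)
    simp [this]

lemma mprodVal_vars {K : Type*} [Field K] {d w t : ℕ} (hw : 0 < w)
    (Xs : Fin d → Finset ℕ) (M : Fin d → Matrix (Fin w) (Fin w) (MvPolynomial ℕ K))
    (hM : IsSparseROABP w t Xs M) {u : ℕ →₀ ℕ} (hu : u ∈ (mprodVal hw M).support) {x : ℕ}
    (hx : x ∉ Finset.univ.biUnion Xs) : u x = 0 := by
  have hsup := matrix_list_prod_mem (MvPolynomial.supported K (Finset.univ.biUnion Xs : Set ℕ))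
      (List.ofFn M) (by
        intro B hB i j
        obtain ⟨k, rfl⟩ := (List.mem_ofFn' _ _).1 hB
        rw [MvPolynomial.mem_supported]
        intro y hy
        exact Finset.mem_coe.2 (Finset.mem_biUnion.2 ⟨k, Finset.mem_univ _, (hM k i j).2.1 hy⟩))
      ⟨0, hw⟩ ⟨0, hw⟩
  exact support_of_supported hsup hu (by simpa using hx)

/-- Row count: one side of the partition. -/
lemma rank_side {K : Type*} [Field K] {h : ℕ} (hh : 0 < h) (X X₀ : Finset ℕ) (hX₀ : X₀ ⊆ X)
    (e : {x // x ∈ X} ≃ (Fin h ⊕ Fin h)) (f : MvPolynomial ℕ K)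
    (hf : ∀ u ∈ f.support, ∀ x ∉ X, u x = 0)
    (A : Finset (ℕ →₀ ℕ)) (hA : ∀ u ∈ f.support, ∃ a ∈ A, ∀ x ∈ X₀, u x = a x)
    (ι : Fin h → Fin h ⊕ Fin h)
    (mono : Finset (Fin h) → Finset (Fin h) → (Fin h ⊕ Fin h →₀ ℕ))
    (hmono : ∀ S T i, mono S T (ι i) = if i ∈ S then 1 else 0)
    (Q : Matrix (Finset (Fin h)) (Finset (Fin h)) K)
    (hQ : ∀ S T, Q S T = (rename (extPart hh X (fun x => e x)) f).coeff (mono S T)) :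
    Q.rank ≤ A.card * 2 ^ (h - (Finset.univ.filter
      fun i => ((e.symm (ι i) : {x // x ∈ X}) : ℕ) ∈ X₀).card) := by
  classical
  set Y₀ := Finset.univ.filter fun i => ((e.symm (ι i) : {x // x ∈ X}) : ℕ) ∈ X₀ with hY₀
  set φ := extPart hh X (fun x => e x) with hφ
  let F : (ℕ →₀ ℕ) × Finset (Fin h) → Finset (Fin h) := fun p =>
    (Y₀.filter fun i => p.1 (e.symm (ι i)) = 1) ∪ p.2
  have hcard : ((A ×ˢ (Finset.univ \ Y₀).powerset).image F).card ≤ A.card * 2 ^ (h - Y₀.card) := by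
    refine Finset.card_image_le.trans ?_
    rw [Finset.card_product, Finset.card_powerset, Finset.card_sdiff_of_subset (Finset.subset_univ _)]
    simp
  refine (rank_le_card_rows Q ((A ×ˢ (Finset.univ \ Y₀).powerset).image F) ?_).trans hcard
  intro S hS T
  by_contra hne
  rw [hQ] at hne
  obtain ⟨u, hu, hcu⟩ := MvPolynomial.coeff_rename_ne_zero φ f _ hne
  have hus : u ∈ f.support := MvPolynomial.mem_support_iff.2 hcu
  obtain ⟨a, ha, hau⟩ := hA u hus
  apply hS
  rw [Finset.mem_image]
  refine ⟨(a, S \ Y₀), ?_, ?_⟩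
  · rw [Finset.mem_product, Finset.mem_powerset]
    exact ⟨ha, Finset.sdiff_subset_sdiff (Finset.subset_univ _) le_rfl⟩
  have hinj : Set.InjOn φ (X : Set ℕ) := by
    intro x hx y hy hxy
    have hx' : x ∈ X := hx
    have hy' : y ∈ X := hy
    simp only [hφ, extPart, hx', hy', dif_pos] at hxy
    simpa using e.injective hxy
  have hval : ∀ i : Fin h, u (e.symm (ι i)) = if i ∈ S then 1 else 0 := by
    intro i
    have h1 : φ (e.symm (ι i)) = ι i := by
      simp [hφ, extPart]
    rw [← hmono S T i, ← hu]
    have hsupp : (u.support : Set ℕ) ⊆ X := by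
      intro y hy
      by_contra hyX
      exact (Finsupp.mem_support_iff.1 hy) (hf u hus y hyX)
    have h3 := Finsupp.mapDomain_apply' (X : Set ℕ) u hsupp hinj (e.symm (ι i)).2
    rw [h1] at h3
    exact h3.symm
  ext i
  have hi := hval i
  simp only [F, Finset.mem_union, Finset.mem_filter, Finset.mem_sdiff]
  by_cases hiY : i ∈ Y₀
  · have h2 : ((e.symm (ι i) : {x // x ∈ X}) : ℕ) ∈ X₀ := (Finset.mem_filter.1 hiY).2
    rw [← hau _ h2, hi]
    by_cases hiS : i ∈ S <;> simp [hiS, hiY]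
  · simp [hiY]

lemma mono_inl {h : ℕ} (S T : Finset (Fin h)) (i : Fin h) :
    ((∑ i ∈ S, Finsupp.single (Sum.inl i) 1) + ∑ j ∈ T, Finsupp.single (Sum.inr j) 1 :
      Fin h ⊕ Fin h →₀ ℕ) (Sum.inl i) = if i ∈ S then 1 else 0 := by
  classical
  simp [Finsupp.finsetSum_apply, Finsupp.single_apply]

lemma mono_inr {h : ℕ} (S T : Finset (Fin h)) (i : Fin h) :
    ((∑ i ∈ S, Finsupp.single (Sum.inl i) 1) + ∑ j ∈ T, Finsupp.single (Sum.inr j) 1 :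
      Fin h ⊕ Fin h →₀ ℕ) (Sum.inr i) = if i ∈ T then 1 else 0 := by
  classical
  simp [Finsupp.finsetSum_apply, Finsupp.single_apply]

/-- Both sides together: there is `m` with `2 m ≥ |X₀|` and rank at most `|A| 2^(h-m)`. -/
lemma rank_both {K : Type*} [Field K] {h : ℕ} (hh : 0 < h) (X X₀ : Finset ℕ) (hX₀ : X₀ ⊆ X)
    (e : {x // x ∈ X} ≃ (Fin h ⊕ Fin h)) (f : MvPolynomial ℕ K)
    (hf : ∀ u ∈ f.support, ∀ x ∉ X, u x = 0)
    (A : Finset (ℕ →₀ ℕ)) (hA : ∀ u ∈ f.support, ∃ a ∈ A, ∀ x ∈ X₀, u x = a x) :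
    ∃ m : ℕ, m ≤ h ∧ X₀.card ≤ 2 * m ∧
      (pdm (rename (extPart hh X (fun x => e x)) f)).rank ≤ A.card * 2 ^ (h - m) := by
  classical
  have h1 := rank_side hh X X₀ hX₀ e f hf A hA Sum.inl _ mono_inl
    (pdm (rename (extPart hh X (fun x => e x)) f)) (fun S T => rfl)
  have h2 := rank_side hh X X₀ hX₀ e f hf A hA Sum.inr _ (fun S T i => mono_inr T S i)
    (pdm (rename (extPart hh X (fun x => e x)) f)).transpose (fun S T => rfl)
  rw [Matrix.rank_transpose] at h2
  set Y := Finset.univ.filter fun i => ((e.symm (Sum.inl i) : {x // x ∈ X}) : ℕ) ∈ X₀ with hY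
  set Z := Finset.univ.filter fun i => ((e.symm (Sum.inr i) : {x // x ∈ X}) : ℕ) ∈ X₀ with hZ
  have hYh : Y.card ≤ h := by simpa using Finset.card_le_univ Y
  have hZh : Z.card ≤ h := by simpa using Finset.card_le_univ Z
  have hsum : X₀.card ≤ Y.card + Z.card := by
    have hsub : X₀ ⊆ Y.image (fun i => ((e.symm (Sum.inl i) : {x // x ∈ X}) : ℕ)) ∪
        Z.image (fun i => ((e.symm (Sum.inr i) : {x // x ∈ X}) : ℕ)) := by
      intro x hx
      rw [Finset.mem_union, Finset.mem_image, Finset.mem_image]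
      rcases hex : e ⟨x, hX₀ hx⟩ with i | i
      · have : e.symm (Sum.inl i) = ⟨x, hX₀ hx⟩ := by rw [← hex, Equiv.symm_apply_apply]
        exact Or.inl ⟨i, by simp [hY, this, hx], by rw [this]⟩
      · have : e.symm (Sum.inr i) = ⟨x, hX₀ hx⟩ := by rw [← hex, Equiv.symm_apply_apply]
        exact Or.inr ⟨i, by simp [hZ, this, hx], by rw [this]⟩
    exact (Finset.card_le_card hsub).trans ((Finset.card_union_le _ _).trans
      (add_le_add Finset.card_image_le Finset.card_image_le))
  rcases le_total Y.card Z.card with hle | hle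
  · exact ⟨Z.card, hZh, by omega, h2⟩
  · exact ⟨Y.card, hYh, by omega, h1⟩

lemma arith_bound {N d m : ℕ} (hN : 16 ≤ N) {α : ℝ} (hα : 1/10 < α) (hα' : α ≤ 1/2)
    (hd : d = ⌈(N : ℝ) ^ α⌉₊) (hdN : d ∣ N) (hm : N / d ≤ 2 * m) :
    (N : ℝ) ^ ((1 - α)/4) / 2 ≤ m := by
  have hN1 : (16 : ℝ) ≤ N := by exact_mod_cast hN
  have hN0 : (0 : ℝ) < N := by linarith
  have hge1 : (1 : ℝ) ≤ (N : ℝ) ^ α := Real.one_le_rpow (by linarith) (by linarith)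
  have hd2 : (d : ℝ) ≤ 2 * (N : ℝ) ^ α := by
    have := (Nat.ceil_lt_add_one (a := (N : ℝ) ^ α) (by linarith)).le
    rw [hd]
    linarith
  have hd0 : (0 : ℝ) < d := by
    have := Nat.le_ceil ((N : ℝ) ^ α)
    rw [← hd] at this
    linarith
  have hm' : (N : ℝ) / d ≤ 2 * m := by
    rw [← Nat.cast_div hdN hd0.ne']
    exact_mod_cast hm
  have hNle : (N : ℝ) ≤ 2 * m * (2 * (N : ℝ) ^ α) := by
    rw [div_le_iff₀ hd0] at hm'
    exact hm'.trans (mul_le_mul_of_nonneg_left hd2 (by positivity))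
  set P := (N : ℝ) ^ ((1 - α)/4) with hP
  have hP0 : 0 < P := Real.rpow_pos_of_pos hN0 _
  have hsplit : (N : ℝ) = P * (N : ℝ) ^ (3 * (1 - α) / 4) * (N : ℝ) ^ α := by
    rw [hP, ← Real.rpow_add hN0, ← Real.rpow_add hN0]
    conv_lhs => rw [← Real.rpow_one (N : ℝ)]
    congr 1
    ring
  have h2 : (2 : ℝ) ≤ (N : ℝ) ^ (3 * (1 - α) / 4) := by
    calc (2 : ℝ) = (16 : ℝ) ^ ((1 : ℝ) / 4) := by
          rw [show (16 : ℝ) = 2 ^ (4 : ℝ) by norm_num, ← Real.rpow_mul (by norm_num)]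
          norm_num
      _ ≤ (N : ℝ) ^ ((1 : ℝ) / 4) := Real.rpow_le_rpow (by norm_num) hN1 (by norm_num)
      _ ≤ _ := Real.rpow_le_rpow_of_exponent_le (by linarith) (by linarith)
  have h3 : P * (N : ℝ) ^ (3 * (1 - α) / 4) ≤ 4 * m := by
    by_contra hcon
    push Not at hcon
    have : 4 * (m : ℝ) * (N : ℝ) ^ α < P * (N : ℝ) ^ (3 * (1 - α) / 4) * (N : ℝ) ^ α :=
      mul_lt_mul_of_pos_right hcon (by linarith)
    rw [← hsplit] at this
    linarith
  nlinarith

/-- With high probability under a random partition, the partial derivative matrix of a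
polynomial computed by an α-sparse ROABP has low rank. -/
theorem sparse_roabp_rank_upper_bound :
    ∃ c c' : ℝ, 0 < c ∧ 0 < c' ∧ ∃ N₀ : ℕ, ∀ (K : Type) [Field K] (N h : ℕ),
      N₀ ≤ N → N = 2 * h → ∀ (hh : 0 < h),
      ∀ (α : ℝ), 1/10 < α → α ≤ 1/2 →
      ∀ (d : ℕ), d = ⌈(N : ℝ) ^ α⌉₊ → d ∣ N →
      ∀ (Xs : Fin d → Finset ℕ),
        (∀ i j, i ≠ j → Disjoint (Xs i) (Xs j)) →
        Finset.univ.biUnion Xs = Finset.Icc 1 N →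
        (∀ i, (Xs i).card = N / d) →
      ∀ (w t : ℕ) (hw : 2 ≤ w)
        (M : Fin d → Matrix (Fin w) (Fin w) (MvPolynomial ℕ K)),
        IsSparseROABP w t Xs M →
        1 - (2 : ℝ) ^ (-(c' * (N : ℝ) ^ ((1 : ℝ)/10) * Real.logb 2 N)) ≤
          unifProb (fun e : {x // x ∈ Finset.Icc 1 N} ≃ (Fin h ⊕ Fin h) =>
            (((pdm (rename (extPart hh (Finset.Icc 1 N) (fun x => e x))
                  (mprodVal (show 0 < w by omega) M))).rank : ℝ) ≤
              (w : ℝ) ^ (c * Real.logb 2 N) * (t : ℝ) *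
                2 ^ ((N : ℝ)/2 - (N : ℝ) ^ ((1 - α)/4) / 2))) := by
  refine ⟨1, 1, one_pos, one_pos, 16, ?_⟩
  intro K _ N h hN hNh hh α hα hα' d hd hdN Xs hdis hcov hcard w t hw M hM
  have hdpos : 0 < d := by
    rw [hd, Nat.ceil_pos]
    exact Real.rpow_pos_of_pos (by exact_mod_cast (by omega : 0 < N)) _
  have hall : ∀ e : {x // x ∈ Finset.Icc 1 N} ≃ (Fin h ⊕ Fin h),
      (((pdm (rename (extPart hh (Finset.Icc 1 N) (fun x => e x))
                  (mprodVal (show 0 < w by omega) M))).rank : ℝ) ≤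
              (w : ℝ) ^ (1 * Real.logb 2 N) * (t : ℝ) *
                2 ^ ((N : ℝ)/2 - (N : ℝ) ^ ((1 - α)/4) / 2)) := by
    intro e
    obtain ⟨d', rfl⟩ : ∃ d', d = d' + 1 := ⟨d - 1, by omega⟩
    obtain ⟨A, hAc, hA⟩ := exists_traces (show 0 < w by omega) Xs hdis M hM
    have hsub : Xs 0 ⊆ Finset.Icc 1 N := by
      rw [← hcov]
      exact Finset.subset_biUnion_of_mem Xs (Finset.mem_univ 0)
    obtain ⟨m, hmh, hm, hr⟩ := rank_both hh (Finset.Icc 1 N) (Xs 0) hsub e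
      (mprodVal (show 0 < w by omega) M)
      (fun u hu x hx => mprodVal_vars _ Xs M hM hu (by rw [hcov]; exact hx)) A hA
    rw [hcard] at hm
    have har := arith_bound hN hα hα' hd hdN hm
    have hN1 : (16 : ℝ) ≤ N := by exact_mod_cast hN
    have hw1 : (2 : ℝ) ≤ w := by exact_mod_cast hw
    have hlog : (1 : ℝ) ≤ 1 * Real.logb 2 N := by
      rw [one_mul, Real.le_logb_iff_rpow_le (by norm_num) (by linarith), Real.rpow_one]
      linarith
    have hwp : (w : ℝ) ≤ (w : ℝ) ^ (1 * Real.logb 2 N) := by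
      conv_lhs => rw [← Real.rpow_one (w : ℝ)]
      exact Real.rpow_le_rpow_of_exponent_le (by linarith) hlog
    have hpow : (2 : ℝ) ^ (h - m) ≤ 2 ^ ((N : ℝ)/2 - (N : ℝ) ^ ((1 - α)/4) / 2) := by
      rw [← Real.rpow_natCast]
      refine Real.rpow_le_rpow_of_exponent_le (by norm_num) ?_
      rw [Nat.cast_sub hmh, hNh]
      rw [hNh] at har
      push_cast at har ⊢
      linarith
    have hr2 := hr.trans (Nat.mul_le_mul_right _ hAc)
    calc _ ≤ ((w * t * 2 ^ (h - m) : ℕ) : ℝ) := by exact_mod_cast hr2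
      _ = (w : ℝ) * t * 2 ^ (h - m) := by push_cast; ring
      _ ≤ _ := by gcongr
  have hne : Nonempty ({x // x ∈ Finset.Icc 1 N} ≃ (Fin h ⊕ Fin h)) := by
    rw [← Fintype.card_eq]
    simp
    omega
  have hone : unifProb (fun e : {x // x ∈ Finset.Icc 1 N} ≃ (Fin h ⊕ Fin h) =>
            (((pdm (rename (extPart hh (Finset.Icc 1 N) (fun x => e x))
                  (mprodVal (show 0 < w by omega) M))).rank : ℝ) ≤
              (w : ℝ) ^ (1 * Real.logb 2 N) * (t : ℝ) *
                2 ^ ((N : ℝ)/2 - (N : ℝ) ^ ((1 - α)/4) / 2))) = 1 := by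
    unfold unifProb
    rw [Finset.filter_true_of_mem (fun e _ => hall e), Finset.card_univ]
    exact div_self (by exact_mod_cast Fintype.card_ne_zero)
  rw [hone]
  have : (0 : ℝ) < (2 : ℝ) ^ (-(1 * (N : ℝ) ^ ((1 : ℝ)/10) * Real.logb 2 N)) :=
    Real.rpow_pos_of_pos (by norm_num) _
  linarith


end
end
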